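/- arXiv:2311.14495 — 2 statements merged into one kernel-verified Lean document; each statement's English description precedes it below -/
import Mathlib

section
/- Let f(w) = −log(1 + e^w) for w ∈ ℝ (negative softplus). Then for every w ∈ ℝ and every β ≥ 0, |f(w)| · sup_{|w̃ − w| ≤ β} ∫₀^∞ |e^{f(w̃) t} − e^{f(w) t}| dt ≤ e^β − 1. Hence the softplus reparameterization is a stable reparameterization with modulus g(β) = e^β − 1. -/
open Set

/-!
With `a = -f w` and `b = -f w'`, the difference `e^{-b t} - e^{-a t}` has constant sign on
`t > 0`, so its absolute integral is `|1/b - 1/a|`, and multiplying by `a` leaves the relative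
error `|a/b - 1|`. Bernoulli's inequality `1 + e^β e^w ≤ (1 + e^w)^{e^β}`, read through the
logarithm, says that moving the argument of softplus by at most `β` changes its value by at most
a factor `e^β` in either direction, so the relative error is at most `e^β - 1`.
-/

open MeasureTheory

theorem integral_abs_exp_neg_mul_sub_exp_neg_mul {a b : ℝ} (ha : 0 < a) (hb : 0 < b) :
    ∫ t in Ioi (0 : ℝ), |Real.exp (-a * t) - Real.exp (-b * t)| = |1 / a - 1 / b| := by
  wlog hab : a ≤ b generalizing a b
  · simp_rw [abs_sub_comm (Real.exp (-a * _)), abs_sub_comm (1 / a)]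
    exact this hb ha (le_of_not_ge hab)
  have abs_eq : EqOn (fun t ↦ |Real.exp (-a * t) - Real.exp (-b * t)|)
      (fun t ↦ Real.exp (-a * t) - Real.exp (-b * t)) (Ioi 0) := by
    intro t (ht : 0 < t)
    refine abs_of_nonneg (sub_nonneg.2 ?_)
    gcongr
  have integral_exp {c : ℝ} (hc : 0 < c) : ∫ t in Ioi (0 : ℝ), Real.exp (-c * t) = 1 / c := by
    rw [integral_exp_mul_Ioi (neg_neg_of_pos hc), mul_zero, Real.exp_zero, neg_div_neg_eq]
  rw [setIntegral_congr_fun measurableSet_Ioi abs_eq,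
    integral_sub (integrableOn_exp_mul_Ioi (neg_neg_of_pos ha) 0)
      (integrableOn_exp_mul_Ioi (neg_neg_of_pos hb) 0),
    integral_exp ha, integral_exp hb,
    abs_of_nonneg (sub_nonneg.2 (one_div_le_one_div_of_le ha hab))]

theorem mul_integral_abs_exp_neg_mul_sub_exp_neg_mul {a b : ℝ} (ha : 0 < a) (hb : 0 < b) :
    a * ∫ t in Ioi (0 : ℝ), |Real.exp (-b * t) - Real.exp (-a * t)| = |a / b - 1| := by
  rw [integral_abs_exp_neg_mul_sub_exp_neg_mul hb ha]
  calc a * |1 / b - 1 / a| = |a * (1 / b - 1 / a)| := by rw [abs_mul, abs_of_pos ha]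
    _ = |a / b - 1| := by rw [mul_sub, mul_one_div, mul_one_div_cancel ha.ne']

theorem abs_div_sub_one_le {K : Type*} [Field K] [LinearOrder K] [IsStrictOrderedRing K]
    {a b c : K} (ha : 0 < a) (hb : 0 < b) (hab : a ≤ c * b) (hba : b ≤ c * a) :
    |a / b - 1| ≤ c - 1 := by
  rcases le_total b a with h | h
  · rw [abs_of_nonneg (sub_nonneg.2 ((one_le_div hb).2 h))]
    exact sub_le_sub_right ((div_le_iff₀ hb).2 hab) 1
  · calc |a / b - 1| = (b - a) / b := by
          rw [abs_of_nonpos (sub_nonpos.2 ((div_le_one hb).2 h)), neg_sub, sub_div, div_self hb.ne']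
      _ ≤ (b - a) / a := div_le_div_of_nonneg_left (sub_nonneg.2 h) ha h
      _ = b / a - 1 := by rw [sub_div, div_self ha.ne']
      _ ≤ c - 1 := sub_le_sub_right ((div_le_iff₀ ha).2 hba) 1

theorem log_one_add_mul_le_mul_log_one_add {c u : ℝ} (hc : 1 ≤ c) (hu : 0 < 1 + c * u) :
    Real.log (1 + c * u) ≤ c * Real.log (1 + u) := by
  have one_add_pos : 0 < 1 + u := by nlinarith
  calc Real.log (1 + c * u) ≤ Real.log ((1 + u) ^ c) :=
        Real.log_le_log hu (one_add_mul_self_le_rpow_one_add (by linarith) hc)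
    _ = c * Real.log (1 + u) := Real.log_rpow one_add_pos c

/-- The softplus function. It is the decay rate `-f` of the reparameterization `f` in `stmt7`, kept
positive here so that the rates can be divided. -/
noncomputable def softplus (x : ℝ) : ℝ := Real.log (1 + Real.exp x)

theorem softplus_pos (x : ℝ) : 0 < softplus x :=
  Real.log_pos (lt_add_of_pos_right 1 (Real.exp_pos x))

theorem softplus_le_exp_abs_sub_mul_softplus (x y : ℝ) :
    softplus x ≤ Real.exp |x - y| * softplus y := by
  have exp_le : Real.exp x ≤ Real.exp |x - y| * Real.exp y := by
    rw [← Real.exp_add, Real.exp_le_exp]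
    exact sub_le_iff_le_add.1 (le_abs_self (x - y))
  calc softplus x ≤ Real.log (1 + Real.exp |x - y| * Real.exp y) :=
        Real.log_le_log (by positivity) (by gcongr)
    _ ≤ Real.exp |x - y| * softplus y :=
        log_one_add_mul_le_mul_log_one_add (Real.one_le_exp (abs_nonneg _)) (by positivity)

theorem softplus_mul_integral_abs_exp_sub_exp_le (w x : ℝ) :
    softplus w * ∫ t in Ioi (0 : ℝ),
        |Real.exp (-softplus x * t) - Real.exp (-softplus w * t)| ≤ Real.exp |x - w| - 1 := by
  rw [mul_integral_abs_exp_neg_mul_sub_exp_neg_mul (softplus_pos w) (softplus_pos x)]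
  refine abs_div_sub_one_le (softplus_pos w) (softplus_pos x) ?_
    (softplus_le_exp_abs_sub_mul_softplus x w)
  simpa only [abs_sub_comm] using softplus_le_exp_abs_sub_mul_softplus w x

/-- The softplus reparameterization `f(w) = −log(1 + e^w)` is stable with modulus
`g(β) = e^β − 1`: for every `w` and `β ≥ 0`,
`|f(w)| ⬝ sup_{|w' − w| ≤ β} ∫₀^∞ |e^{f(w') t} − e^{f(w) t}| dt ≤ e^β − 1`. -/
theorem stmt7 (β : ℝ) (hβ : 0 ≤ β) (w : ℝ) :
    |(-Real.log (1 + Real.exp w))| *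
      (⨆ wt : {x : ℝ // |x - w| ≤ β},
        ∫ t in Ioi (0:ℝ),
          |Real.exp (-Real.log (1 + Real.exp (wt : ℝ)) * t) -
            Real.exp (-Real.log (1 + Real.exp w) * t)|)
      ≤ Real.exp β - 1 := by
  change |-softplus w| * (⨆ wt : {x : ℝ // |x - w| ≤ β}, ∫ t in Ioi (0 : ℝ),
    |Real.exp (-softplus wt * t) - Real.exp (-softplus w * t)|) ≤ Real.exp β - 1
  have : Nonempty {x : ℝ // |x - w| ≤ β} := ⟨⟨w, by simpa using hβ⟩⟩
  rw [abs_neg, abs_of_pos (softplus_pos w), Real.mul_iSup_of_nonneg (softplus_pos w).le]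
  refine ciSup_le fun ⟨x, hx⟩ ↦ ?_
  exact (softplus_mul_integral_abs_exp_sub_exp_le w x).trans (by gcongr)
end

section
/- The direct parameterization is not a stable reparameterization: for the identity map f(w) = w restricted to w < 0, for every β > 0 the quantity sup_{w < −β} [ |w| · sup_{w̃ ∈ (w−β, w+β), w̃ < 0} ∫₀^∞ |e^{w̃ t} − e^{w t}| dt ] is infinite. More precisely, for 0 ≤ β < −w one has sup_{|w̃−w| ≤ β} ∫₀^∞ |e^{w̃ t} − e^{w t}| dt = β/((−w−β)(−w)), and |w| · β/((−w−β)(−w)) = β/(−w−β) → ∞ as w → (−β)⁻. -/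
open Set Filter

/-!
The inner integral equals `|w'⁻¹ - w⁻¹|`, so the inner supremum measures how far inversion moves the
points of the ball of radius `β` around `w`. The largest displacement occurs at the point of the
ball closest to the singularity `0`, and it blows up when the ball reaches `0`, while the factor
`|w|` stays close to `β`.
-/

open MeasureTheory Topology

lemma integral_abs_sub_of_ae_le {α : Type*} [MeasurableSpace α] {μ : Measure α} {f g : α → ℝ}
    (hf : Integrable f μ) (hg : Integrable g μ) (hgf : g ≤ᵐ[μ] f) :
    ∫ x, |f x - g x| ∂μ = ∫ x, f x ∂μ - ∫ x, g x ∂μ := by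
  rw [← integral_sub hf hg]
  refine integral_congr_ae ?_
  filter_upwards [hgf] with x hx
  exact abs_of_nonneg (sub_nonneg.mpr hx)

lemma integral_abs_exp_mul_sub_exp_mul_Ioi {a b : ℝ} (ha : a < 0) (hb : b < 0) :
    ∫ t in Ioi (0 : ℝ), |Real.exp (a * t) - Real.exp (b * t)| = dist a⁻¹ b⁻¹ := by
  wlog hba : b ≤ a generalizing a b
  · simpa only [abs_sub_comm, dist_comm] using this hb ha (le_of_not_ge hba)
  have hexp : ∀ t ∈ Ioi (0 : ℝ), Real.exp (b * t) ≤ Real.exp (a * t) := fun t ht =>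
    Real.exp_le_exp.mpr (mul_le_mul_of_nonneg_right hba (le_of_lt ht))
  have hinv : a⁻¹ ≤ b⁻¹ := (inv_le_inv_of_neg ha hb).mpr hba
  calc ∫ t in Ioi (0 : ℝ), |Real.exp (a * t) - Real.exp (b * t)|
      = (∫ t in Ioi (0 : ℝ), Real.exp (a * t)) - ∫ t in Ioi (0 : ℝ), Real.exp (b * t) :=
        integral_abs_sub_of_ae_le (integrableOn_exp_mul_Ioi ha 0) (integrableOn_exp_mul_Ioi hb 0)
          (ae_restrict_of_forall_mem measurableSet_Ioi hexp)
    _ = b⁻¹ - a⁻¹ := by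
        rw [integral_exp_mul_Ioi ha, integral_exp_mul_Ioi hb, mul_zero, mul_zero, Real.exp_zero]
        ring
    _ = dist a⁻¹ b⁻¹ := by rw [dist_comm, Real.dist_eq, abs_of_nonneg (sub_nonneg.mpr hinv)]

lemma dist_inv_inv_le_of_dist_le {K : Type*} [NormedDivisionRing K] {x w : K} {β : ℝ}
    (hβw : β < ‖w‖) (hx : dist x w ≤ β) :
    dist x⁻¹ w⁻¹ ≤ β / ((‖w‖ - β) * ‖w‖) := by
  have hβ : 0 ≤ β := dist_nonneg.trans hx
  have hgap : 0 < ‖w‖ - β := sub_pos.mpr hβw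
  have hnorm : ‖w‖ - β ≤ ‖x‖ := by
    have := norm_sub_norm_le w x
    rw [← dist_eq_norm, dist_comm] at this
    linarith
  have hw : 0 < ‖w‖ := hβ.trans_lt hβw
  rw [dist_inv_inv₀ (norm_pos_iff.mp (hgap.trans_le hnorm)) (norm_pos_iff.mp hw)]
  gcongr

lemma isGreatest_dist_inv_image_closedBall {K : Type*} [NormedDivisionRing K] [NormedAlgebra ℝ K]
    {w : K} {β : ℝ} (hβ : 0 ≤ β) (hβw : β < ‖w‖) :
    IsGreatest ((fun x => dist x⁻¹ w⁻¹) '' Metric.closedBall w β) (β / ((‖w‖ - β) * ‖w‖)) := by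
  refine ⟨?_, forall_mem_image.mpr fun x hx => dist_inv_inv_le_of_dist_le hβw hx⟩
  have hw : 0 < ‖w‖ := hβ.trans_lt hβw
  have hratio : 0 < 1 - β / ‖w‖ := sub_pos.mpr ((div_lt_one hw).mpr hβw)
  -- The point of the ball closest to `0`.
  let x : K := AffineMap.lineMap w 0 (β / ‖w‖)
  have hdist : dist x w = β := by
    rw [dist_lineMap_left, dist_zero_right, Real.norm_of_nonneg (by positivity),
      div_mul_cancel₀ _ hw.ne']
  have hnorm : ‖x‖ = ‖w‖ - β := by
    rw [← dist_zero_right, dist_lineMap_right, dist_zero_right, Real.norm_of_nonneg hratio.le,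
      sub_mul, one_mul, div_mul_cancel₀ _ hw.ne']
  have hx : x ≠ 0 := norm_pos_iff.mp (hnorm ▸ sub_pos.mpr hβw)
  refine ⟨x, hdist.le, ?_⟩
  simp only [dist_inv_inv₀ hx (norm_pos_iff.mp hw), hdist, hnorm]

lemma iSup_integral_abs_exp_mul_sub_exp_mul {w β : ℝ} (hβ : 0 ≤ β) (hβw : β < -w) :
    (⨆ wt : {x : ℝ // |x - w| ≤ β},
        ∫ t in Ioi (0 : ℝ), |Real.exp ((wt : ℝ) * t) - Real.exp (w * t)|)
      = β / ((-w - β) * (-w)) := by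
  have hw : w < 0 := by linarith
  have hnorm : ‖w‖ = -w := Real.norm_of_nonpos hw.le
  have hintegral (wt : {x : ℝ // |x - w| ≤ β}) :
      ∫ t in Ioi (0 : ℝ), |Real.exp ((wt : ℝ) * t) - Real.exp (w * t)| = dist (wt : ℝ)⁻¹ w⁻¹ :=
    integral_abs_exp_mul_sub_exp_mul_Ioi (by linarith [(abs_le.mp wt.2).2]) hw
  calc (⨆ wt : {x : ℝ // |x - w| ≤ β},
          ∫ t in Ioi (0 : ℝ), |Real.exp ((wt : ℝ) * t) - Real.exp (w * t)|)
      = ⨆ wt : Metric.closedBall w β, dist (wt : ℝ)⁻¹ w⁻¹ := iSup_congr hintegral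
    _ = sSup ((fun x => dist x⁻¹ w⁻¹) '' Metric.closedBall w β) :=
        (sSup_image' (f := fun x => dist x⁻¹ w⁻¹)).symm
    _ = β / ((-w - β) * (-w)) := by
        rw [(isGreatest_dist_inv_image_closedBall hβ (hnorm ▸ hβw)).csSup_eq, hnorm]

lemma tendsto_const_div_sub_nhdsLT {K : Type*} [Field K] [LinearOrder K] [IsStrictOrderedRing K]
    [TopologicalSpace K] [OrderTopology K] {c : K} (hc : 0 < c) (a : K) :
    Tendsto (fun x => c / (a - x)) (𝓝[<] a) atTop := by
  have hsub : Tendsto (fun x => a - x) (𝓝[<] a) (𝓝[>] 0) := by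
    refine tendsto_nhdsWithin_iff.mpr ⟨?_, ?_⟩
    · exact ((continuous_sub_left a).tendsto' a 0 (sub_self a)).mono_left nhdsWithin_le_nhds
    · filter_upwards [self_mem_nhdsWithin] with x hx using sub_pos.mpr hx
  simp only [div_eq_mul_inv]
  exact hsub.inv_tendsto_nhdsGT_zero.const_mul_atTop hc

/-- The direct parameterization `f(w) = w` (for `w < 0`) is not stable: for `0 ≤ β < −w`,
`sup_{|w' − w| ≤ β} ∫₀^∞ |e^{w' t} − e^{w t}| dt = β/((−w−β)(−w))`, so that
`|w| ⬝ β/((−w−β)(−w)) = β/(−w−β)`, which tends to `∞` as `w → (−β)⁻`; in particular the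
supremum over `w < −β` of the stability quantity is infinite. -/
theorem stmt9 :
    (∀ w β : ℝ, 0 ≤ β → β < -w →
      ((⨆ wt : {x : ℝ // |x - w| ≤ β},
          ∫ t in Ioi (0:ℝ), |Real.exp ((wt : ℝ) * t) - Real.exp (w * t)|)
        = β / ((-w - β) * (-w))) ∧
      |w| * (β / ((-w - β) * (-w))) = β / (-w - β)) ∧
    (∀ β : ℝ, 0 < β →
      Tendsto (fun w : ℝ => β / (-w - β)) (nhdsWithin (-β) (Iio (-β))) atTop) ∧
    (∀ β : ℝ, 0 < β → ∀ M : ℝ, ∃ w : ℝ, w < -β ∧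
      M < |w| *
        (⨆ wt : {x : ℝ // |x - w| ≤ β},
          ∫ t in Ioi (0:ℝ), |Real.exp ((wt : ℝ) * t) - Real.exp (w * t)|)) := by
  have hmul (w β : ℝ) (hβ : 0 ≤ β) (hβw : β < -w) :
      |w| * (β / ((-w - β) * (-w))) = β / (-w - β) := by
    have hw : 0 < -w := hβ.trans_lt hβw
    rw [abs_of_neg (neg_pos.mp hw), mul_comm (-w - β), mul_div_assoc', mul_div_mul_left _ _ hw.ne']
  have hlim (β : ℝ) (hβ : 0 < β) :
      Tendsto (fun w : ℝ => β / (-w - β)) (𝓝[<] (-β)) atTop := by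
    simp only [neg_sub_comm _ β]
    exact tendsto_const_div_sub_nhdsLT hβ (-β)
  refine ⟨fun w β hβ hβw => ⟨iSup_integral_abs_exp_mul_sub_exp_mul hβ hβw, hmul w β hβ hβw⟩, hlim,
    fun β hβ M => ?_⟩
  obtain ⟨w, hM, hw⟩ := (((hlim β hβ).eventually_gt_atTop M).and self_mem_nhdsWithin).exists
  have hβw : β < -w := lt_neg_of_lt_neg hw
  refine ⟨w, hw, ?_⟩
  rwa [iSup_integral_abs_exp_mul_sub_exp_mul hβ.le hβw, hmul w β hβ.le hβw]
end
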